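/- Let K : [0,∞) → [0,∞) be right-continuous, nondecreasing, positive on (0,∞) and doubling, satisfying conditions (2.1) and (2.2). Let n ≥ 2 be an integer, let f be analytic on the unit disk 𝔻 with f ∈ Q_K, let F(z) = ∫₀ᶻ f(w) dw be its primitive, and assume F ∈ H² with a.e. radial boundary values F*. Then there exists a function F̃ of class C¹ on the exterior domain {z ∈ ℂ : |z| > 1} such that: (a) for a.e. θ ∈ [0,2π], F̃(re^{iθ}) → F*(θ) as r → 1⁺; (b) F̃(z) = O(z^n) as z → ∞; (c) ∂̄F̃(z) = O(z^{n−2}) as z → ∞; and (d) sup_{a∈𝔻} ∫_{|z|>1} (|∂̄F̃(z)|²/(|z|^n − 1)²) · K(1 − 1/|σ_a(z)|²) dA(z) < ∞. -/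

import Mathlib

open MeasureTheory Metric Complex Filter Set
open scoped ENNReal Real Topology

noncomputable section

/-- The Möbius transformation `σ_a(z) = (a - z)/(1 - conj a · z)`. -/
def mobius (a z : ℂ) : ℂ := (a - z) / (1 - (starRingEnd ℂ) a * z)

/-- The Cauchy–Riemann (Wirtinger) operator `∂̄g = (1/2)(∂g/∂x + i ∂g/∂y)`. -/
def dbar (g : ℂ → ℂ) (z : ℂ) : ℂ :=
  (1 / 2 : ℂ) * (fderiv ℝ g z 1 + Complex.I * fderiv ℝ g z Complex.I)

/-- `φ_K(s) = sup_{0 ≤ t ≤ 1} K(st)/K(t)`. -/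
def phiK (K : ℝ → ℝ) (s : ℝ) : ℝ :=
  sSup ((fun t => K (s * t) / K t) '' Set.Icc (0 : ℝ) 1)

/-- Condition (2.1): `∫₀¹ φ_K(s)/s ds < ∞`. -/
def Cond21 (K : ℝ → ℝ) : Prop :=
  IntegrableOn (fun s => phiK K s / s) (Set.Ioo (0 : ℝ) 1)

/-- Condition (2.2) with exponent `q`: `∫₁^∞ φ_K(s)/s^{1+q} ds < ∞`. -/
def Cond22 (K : ℝ → ℝ) (q : ℝ) : Prop :=
  IntegrableOn (fun s => phiK K s / s ^ (1 + q)) (Set.Ioi (1 : ℝ))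

/-- Membership in the space `Q_K`. -/
def MemQK (K : ℝ → ℝ) (f : ℂ → ℂ) : Prop :=
  (⨆ a ∈ ball (0 : ℂ) 1, ∫⁻ z in ball (0 : ℂ) 1,
      ENNReal.ofReal (‖deriv f z‖ ^ 2 * K (1 - ‖mobius a z‖ ^ 2))) < ⊤

/-- Membership in the Hardy space `H²`. -/
def MemH2 (F : ℂ → ℂ) : Prop :=
  ∃ M : ℝ, ∀ r ∈ Set.Ioo (0 : ℝ) 1,
    (∫ θ in (0 : ℝ)..(2 * Real.pi),
      ‖F ((r : ℂ) * Complex.exp (θ * Complex.I))‖ ^ 2) ≤ M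

/-- `Fb` is the a.e. radial boundary value function of `F` (from inside). -/
def RadialLimitIn (F : ℂ → ℂ) (Fb : ℝ → ℂ) : Prop :=
  ∀ᵐ (θ : ℝ) ∂(volume.restrict (Set.Ioc (0 : ℝ) (2 * Real.pi))),
    Tendsto (fun r : ℝ => F ((r : ℂ) * Complex.exp (θ * Complex.I)))
      (𝓝[<] 1) (𝓝 (Fb θ))

/-- `Fb` is the a.e. radial limit function of `G` from outside the circle. -/
def RadialLimitOut (G : ℂ → ℂ) (Fb : ℝ → ℂ) : Prop :=
  ∀ᵐ (θ : ℝ) ∂(volume.restrict (Set.Ioc (0 : ℝ) (2 * Real.pi))),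
    Tendsto (fun r : ℝ => G ((r : ℂ) * Complex.exp (θ * Complex.I)))
      (𝓝[>] 1) (𝓝 (Fb θ))

/-- `g(z) = O(z^m)` as `z → ∞`. -/
def BigOPow (g : ℂ → ℂ) (m : ℕ) : Prop :=
  ∃ C R : ℝ, 0 < C ∧ 0 < R ∧ ∀ z : ℂ, R ≤ ‖z‖ → ‖g z‖ ≤ C * ‖z‖ ^ m

/-- Tonelli-type lower bound for the area integral in polar coordinates. -/
lemma area_mean_zero (g : ℂ → ℂ) (ρ : ℝ) (hρ : 0 < ρ)
    (hg : DifferentiableOn ℂ g (ball (0 : ℂ) ρ)) :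
    ENNReal.ofReal (ρ ^ 2) * ‖g 0‖ₑ ≤ ∫⁻ z in ball (0 : ℂ) ρ, ‖g z‖ₑ := by
  have hinner : ∀ t ∈ Ioo (ρ / 2) ρ, ENNReal.ofReal (2 * π) * ‖g 0‖ₑ ≤
      ∫⁻ θ in Ioo (-π) π, ‖g (Complex.polarCoord.symm (t, θ))‖ₑ := by
    intro t ht
    have ht0 : 0 < t := by linarith [ht.1]
    have hd : DiffContOnCl ℂ g (ball 0 |t|) := by
      apply DifferentiableOn.diffContOnCl
      apply hg.mono
      rw [abs_of_pos ht0]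
      exact closure_ball_subset_closedBall.trans (closedBall_subset_ball ht.2)
    have h1 := hd.circleAverage
    rw [Real.circleAverage] at h1
    have hper : Function.Periodic (fun θ => g (circleMap 0 t θ)) (2 * π) :=
      fun θ => by simp only [periodic_circleMap 0 t θ]
    have h2 := hper.intervalIntegral_add_eq 0 (-π)
    rw [zero_add, show -π + 2 * π = π by ring] at h2
    rw [h2] at h1
    have h3 : ∫ θ in (-π)..π, g (circleMap 0 t θ) = (2 * π : ℝ) • g 0 := by
      rw [← h1, smul_smul, mul_inv_cancel₀ (by positivity), one_smul]
    rw [intervalIntegral.integral_of_le (by linarith [Real.pi_pos]),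
      integral_Ioc_eq_integral_Ioo] at h3
    have h4 := enorm_integral_le_lintegral_enorm (μ := volume.restrict (Ioo (-π) π))
      (fun θ => g (circleMap 0 t θ))
    rw [h3, enorm_smul, Real.enorm_of_nonneg (by positivity)] at h4
    refine h4.trans (le_of_eq ?_)
    congr 1
    ext θ
    rw [Complex.polarCoord_symm_apply, circleMap_zero, Complex.exp_mul_I]
    simp
  rw [← lintegral_indicator measurableSet_ball, ← Complex.lintegral_comp_polarCoord_symm,
    polarCoord_target]
  have hsub : Ioo (ρ / 2) ρ ×ˢ Ioo (-π) π ⊆ Ioi (0 : ℝ) ×ˢ Ioo (-π) π :=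
    Set.prod_mono (fun x hx => lt_trans (by positivity) hx.1) le_rfl
  refine le_trans ?_ (lintegral_mono_set hsub)
  have hmeas : MeasurableSet (Ioo (ρ / 2) ρ ×ˢ Ioo (-π) π) :=
    measurableSet_Ioo.prod measurableSet_Ioo
  have hnorm : ∀ p : ℝ × ℝ, p ∈ Ioo (ρ / 2) ρ ×ˢ Ioo (-π) π →
      Complex.polarCoord.symm p ∈ ball (0 : ℂ) ρ := by
    intro p hp
    have : (0:ℝ) < p.1 := lt_trans (by positivity) hp.1.1
    rw [mem_ball_zero_iff, Complex.norm_polarCoord_symm, abs_of_pos this]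
    exact hp.1.2
  have hlow : ∫⁻ p in Ioo (ρ / 2) ρ ×ˢ Ioo (-π) π,
      ENNReal.ofReal (ρ / 2) * ‖g (Complex.polarCoord.symm p)‖ₑ ≤
      ∫⁻ p in Ioo (ρ / 2) ρ ×ˢ Ioo (-π) π, ENNReal.ofReal p.1 •
        (ball (0 : ℂ) ρ).indicator (fun z => ‖g z‖ₑ) (Complex.polarCoord.symm p) := by
    refine setLIntegral_mono' hmeas fun p hp => ?_
    rw [indicator_of_mem (hnorm p hp), smul_eq_mul]
    gcongr
    exact hp.1.1.le
  refine le_trans ?_ hlow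
  rw [lintegral_const_mul' _ _ ENNReal.ofReal_ne_top, Measure.volume_eq_prod, 
    ← Measure.prod_restrict, lintegral_prod]
  · have h5 : ∫⁻ t in Ioo (ρ / 2) ρ, ENNReal.ofReal (2 * π) * ‖g 0‖ₑ ≤
      ∫⁻ t in Ioo (ρ / 2) ρ, ∫⁻ θ in Ioo (-π) π, ‖g (Complex.polarCoord.symm (t, θ))‖ₑ :=
      setLIntegral_mono' measurableSet_Ioo hinner
    refine le_trans ?_ (mul_le_mul_right h5 _)
    rw [setLIntegral_const, Real.volume_Ioo, mul_right_comm, ← mul_assoc, ← mul_assoc,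
      ← ENNReal.ofReal_mul (by positivity), ← ENNReal.ofReal_mul (by positivity)]
    gcongr
    nlinarith [Real.pi_gt_three, sq_pos_of_pos hρ]
  · rw [Measure.prod_restrict]
    have hc : ContinuousOn (fun p => ‖g (Complex.polarCoord.symm p)‖ₑ)
        (Ioo (ρ / 2) ρ ×ˢ Ioo (-π) π) := by
      refine continuous_enorm.comp_continuousOn (hg.continuousOn.comp ?_ hnorm)
      have : Continuous (fun p : ℝ × ℝ => Complex.polarCoord.symm p) := by
        simp only [Complex.polarCoord_symm_apply]
        fun_prop
      exact this.continuousOn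
    exact hc.aemeasurable hmeas

lemma area_mean (g : ℂ → ℂ) (a : ℂ) (ρ : ℝ) (hρ : 0 < ρ)
    (hg : DifferentiableOn ℂ g (ball a ρ)) :
    ENNReal.ofReal (ρ ^ 2) * ‖g a‖ₑ ≤ ∫⁻ z in ball a ρ, ‖g z‖ₑ := by
  have hm : ∀ z ∈ ball (0 : ℂ) ρ, a + z ∈ ball a ρ := by
    intro z hz
    simpa [mem_ball, dist_eq_norm] using hz
  have h := area_mean_zero (fun z => g (a + z)) ρ hρ
    (hg.comp (by fun_prop) hm)
  simp only [add_zero] at h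
  refine h.trans (le_of_eq ?_)
  rw [← lintegral_indicator measurableSet_ball, ← lintegral_indicator measurableSet_ball,
    ← lintegral_add_left_eq_self ((ball a ρ).indicator fun z => ‖g z‖ₑ) a]
  congr 1
  ext z
  simp only [Set.indicator, mem_ball, dist_eq_norm, sub_zero, add_sub_cancel_left]

lemma mobius_small (a z : ℂ) (ha : ‖a‖ < 1) (hz : z ∈ ball a ((1 - ‖a‖) / 2)) :
    ‖mobius a z‖ ≤ 1 / 2 := by
  rw [mem_ball, dist_eq_norm] at hz
  have h1 : 1 - (starRingEnd ℂ) a * z = ((1 - ‖a‖ ^ 2 : ℝ) : ℂ) - (starRingEnd ℂ) a * (z - a) := by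
    have := Complex.conj_mul' a
    push_cast
    linear_combination -this
  have h2 : 1 - ‖a‖ ≤ ‖1 - (starRingEnd ℂ) a * z‖ := by
    rw [h1]
    refine le_trans ?_ (norm_sub_norm_le _ _)
    rw [norm_mul, Complex.norm_conj, Complex.norm_real, Real.norm_eq_abs,
      abs_of_nonneg (by nlinarith [norm_nonneg a])]
    nlinarith [norm_nonneg a, mul_le_mul_of_nonneg_left hz.le (norm_nonneg a)]
  rw [mobius, norm_div, div_le_iff₀ (by linarith), norm_sub_rev]
  linarith

/-- `Q_K` is contained in the Bloch space. -/
lemma bloch (K : ℝ → ℝ) (hKmono : MonotoneOn K (Set.Ici (0 : ℝ)))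
    (hKpos : ∀ t : ℝ, 0 < t → 0 < K t) (f : ℂ → ℂ)
    (hf : DifferentiableOn ℂ f (ball (0 : ℂ) 1)) (hfQK : MemQK K f) :
    ∃ C : ℝ, 0 ≤ C ∧ ∀ a ∈ ball (0 : ℂ) 1, ‖deriv f a‖ ≤ C / (1 - ‖a‖) := by
  rw [MemQK] at hfQK
  set M := ⨆ a ∈ ball (0 : ℂ) 1, ∫⁻ z in ball (0 : ℂ) 1,
      ENNReal.ofReal (‖deriv f z‖ ^ 2 * K (1 - ‖mobius a z‖ ^ 2)) with hM
  have hk := hKpos (1 / 2) (by norm_num)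
  refine ⟨2 * √(M.toReal / K (1 / 2)), by positivity, fun a ha => ?_⟩
  have ha' : ‖a‖ < 1 := by simpa using ha
  set ρ := (1 - ‖a‖) / 2 with hρdef
  have hρ : 0 < ρ := by rw [hρdef]; linarith
  have hsub : ball a ρ ⊆ ball (0 : ℂ) 1 := by
    apply ball_subset_ball'
    rw [dist_zero_right, hρdef]; linarith
  have hd : DifferentiableOn ℂ (deriv f) (ball (0 : ℂ) 1) := hf.deriv isOpen_ball
  have h1 := area_mean (fun z => deriv f z ^ 2) a ρ hρ ((hd.mono hsub).pow 2)
  have h2 : ENNReal.ofReal (K (1 / 2)) * ∫⁻ z in ball a ρ, ‖deriv f z ^ 2‖ₑ ≤ M := by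
    rw [← lintegral_const_mul' _ _ ENNReal.ofReal_ne_top]
    refine le_trans ?_ (le_iSup₂_of_le a ha (lintegral_mono_set hsub))
    refine setLIntegral_mono' measurableSet_ball fun z hz => ?_
    rw [← ofReal_norm, ← ENNReal.ofReal_mul hk.le, norm_pow, mul_comm]
    have := mobius_small a z ha' hz
    have h0 := norm_nonneg (mobius a z)
    gcongr
    exact hKmono (by norm_num) (by rw [mem_Ici]; nlinarith) (by nlinarith)
  have h3 := (mul_le_mul_right h1 (ENNReal.ofReal (K (1 / 2)))).trans h2
  rw [← ofReal_norm, ← ENNReal.ofReal_mul (by positivity), ← ENNReal.ofReal_mul hk.le,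
    ENNReal.ofReal_le_iff_le_toReal hfQK.ne, norm_pow] at h3
  have h4 : ‖deriv f a‖ * ρ ≤ √(M.toReal / K (1 / 2)) := by
    apply Real.le_sqrt_of_sq_le
    rw [le_div_iff₀ hk]
    nlinarith
  rw [le_div_iff₀ (by linarith)]
  rw [hρdef] at h4
  linarith

lemma bloch_growth (f : ℂ → ℂ) (hf : DifferentiableOn ℂ f (ball (0 : ℂ) 1)) (C : ℝ)
    (hC : ∀ a ∈ ball (0 : ℂ) 1, ‖deriv f a‖ ≤ C / (1 - ‖a‖)) (ζ : ℂ) (hζ : ‖ζ‖ = 1)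
    (r : ℝ) (hr0 : 0 ≤ r) (hr1 : r < 1) :
    ‖f (r * ζ)‖ ≤ ‖f 0‖ - C * Real.log (1 - r) := by
  have hmem : ∀ x ∈ Icc 0 r, (x : ℂ) * ζ ∈ ball (0 : ℂ) 1 := by
    intro x hx
    rw [mem_ball_zero_iff, norm_mul, hζ, mul_one, Complex.norm_real, Real.norm_eq_abs,
      abs_of_nonneg hx.1]
    linarith [hx.2]
  have hder : ∀ x ∈ Icc 0 r, HasDerivAt (fun x : ℝ => f (x * ζ)) (deriv f (x * ζ) * ζ) x := by
    intro x hx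
    have h1 : HasDerivAt f (deriv f (x * ζ)) ((x : ℂ) * ζ) :=
      (hf.differentiableAt (isOpen_ball.mem_nhds (hmem x hx))).hasDerivAt
    have h2 : HasDerivAt (fun z : ℂ => z * ζ) ζ (x : ℂ) := by
      simpa using (hasDerivAt_id (x : ℂ)).mul_const ζ
    exact (h1.comp (x : ℂ) h2).comp_ofReal
  have hB : ∀ x ∈ Icc 0 r, HasDerivAt (fun x : ℝ => ‖f 0‖ - C * Real.log (1 - x))
      (C / (1 - x)) x := by
    intro x hx
    have h1 : HasDerivAt (fun x : ℝ => 1 - x) (-1) x := by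
      simpa using (hasDerivAt_id x).const_sub 1
    have h2 := ((h1.log (by linarith [hx.2])).const_mul C).const_sub ‖f 0‖
    refine h2.congr_deriv ?_
    ring
  refine image_norm_le_of_norm_deriv_right_le_deriv_boundary' (a := 0) (b := r)
    (f := fun x : ℝ => f (x * ζ)) (f' := fun x => deriv f (x * ζ) * ζ)
    (B := fun x : ℝ => ‖f 0‖ - C * Real.log (1 - x)) (B' := fun x => C / (1 - x))
    (fun x hx => (hder x hx).continuousAt.continuousWithinAt)
    (fun x hx => (hder x (Ico_subset_Icc_self hx)).hasDerivWithinAt) (by simp)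
    (fun x hx => (hB x hx).continuousAt.continuousWithinAt)
    (fun x hx => (hB x (Ico_subset_Icc_self hx)).hasDerivWithinAt) ?_ ⟨hr0, le_rfl⟩
  intro x hx
  have := hC _ (hmem x (Ico_subset_Icc_self hx))
  simpa [hζ, abs_of_nonneg hx.1] using this

lemma bloch_limit (f : ℂ → ℂ) (hf : DifferentiableOn ℂ f (ball (0 : ℂ) 1)) (C : ℝ)
    (hC : ∀ a ∈ ball (0 : ℂ) 1, ‖deriv f a‖ ≤ C / (1 - ‖a‖)) (ζ : ℂ) (hζ : ‖ζ‖ = 1) :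
    Tendsto (fun r : ℝ => (1 - r) * ‖f (r * ζ)‖) (𝓝[<] 1) (𝓝 0) := by
  have hc : Continuous fun r : ℝ => (1 - r) * ‖f 0‖ - C * ((1 - r) * Real.log (1 - r)) := by
    have := Real.continuous_mul_log.comp (continuous_const.sub continuous_id : 
      Continuous fun r : ℝ => 1 - r)
    exact ((continuous_const.sub continuous_id).mul continuous_const).sub
      (continuous_const.mul this)
  have h0 := (hc.tendsto 1).mono_left (nhdsWithin_le_nhds (s := Iio 1))
  simp only [sub_self, zero_mul, mul_zero] at h0
  have hev : ∀ᶠ r : ℝ in 𝓝[<] 1, r ∈ Ioo (0 : ℝ) 1 := Ioo_mem_nhdsLT (by norm_num)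
  refine squeeze_zero' ?_ ?_ h0
  · filter_upwards [hev] with r hr
    exact mul_nonneg (by linarith [hr.2]) (norm_nonneg _)
  · filter_upwards [hev] with r hr
    have := mul_le_mul_of_nonneg_left (bloch_growth f hf C hC ζ hζ r hr.1.le hr.2)
      (by linarith [hr.2] : 0 ≤ 1 - r)
    linarith

/-- The pseudoanalytic extension by reflection. -/
def extF (f F : ℂ → ℂ) (z : ℂ) : ℂ :=
  F ((starRingEnd ℂ) z)⁻¹ + f ((starRingEnd ℂ) z)⁻¹ * (z - ((starRingEnd ℂ) z)⁻¹)

lemma inv_conj_mem {z : ℂ} (hz : 1 < ‖z‖) : ((starRingEnd ℂ) z)⁻¹ ∈ ball (0 : ℂ) 1 := by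
  rw [mem_ball_zero_iff, norm_inv, Complex.norm_conj]
  exact inv_lt_one_of_one_lt₀ hz

lemma extF_contDiffOn (f F : ℂ → ℂ)
    (hf : DifferentiableOn ℂ f (ball (0 : ℂ) 1)) (hF : DifferentiableOn ℂ F (ball (0 : ℂ) 1)) :
    ContDiffOn ℝ 1 (extF f F) {z : ℂ | 1 < ‖z‖} := by
  have hc : ContDiffOn ℝ 1 (fun z : ℂ => ((starRingEnd ℂ) z)⁻¹) {z : ℂ | 1 < ‖z‖} := by
    apply ContDiffOn.inv
    · exact Complex.conjCLE.contDiff.contDiffOn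
    · intro z hz h
      have : z = 0 := by simpa using h
      simp only [this, mem_ofPred_eq, norm_zero] at hz
      linarith
  have hm : MapsTo (fun z : ℂ => ((starRingEnd ℂ) z)⁻¹) {z : ℂ | 1 < ‖z‖} (ball 0 1) :=
    fun z hz => inv_conj_mem hz
  have h1 : ContDiffOn ℝ 1 f (ball 0 1) := (hf.contDiffOn isOpen_ball).restrict_scalars ℝ
  have h2 : ContDiffOn ℝ 1 F (ball 0 1) := (hF.contDiffOn isOpen_ball).restrict_scalars ℝ
  exact (h2.comp hc hm).add ((h1.comp hc hm).mul (contDiffOn_id.sub hc))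

lemma extF_dbar (f F : ℂ → ℂ) (hf : DifferentiableOn ℂ f (ball (0 : ℂ) 1))
    (hFprim : ∀ z ∈ ball (0 : ℂ) 1, HasDerivAt F (f z) z) (z : ℂ) (hz : 1 < ‖z‖) :
    dbar (extF f F) z = -deriv f ((starRingEnd ℂ) z)⁻¹ * (((starRingEnd ℂ) z)⁻¹) ^ 2 *
      (z - ((starRingEnd ℂ) z)⁻¹) := by
  have hz0 : (starRingEnd ℂ) z ≠ 0 := by
    intro h
    have : z = 0 := by simpa using h
    simp only [this, norm_zero] at hz
    linarith
  set u := (starRingEnd ℂ) z with hu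
  have hw : u⁻¹ ∈ ball (0 : ℂ) 1 := inv_conj_mem hz
  have hconj : HasFDerivAt (fun z : ℂ => (starRingEnd ℂ) z)
      (Complex.conjCLE : ℂ →L[ℝ] ℂ) z := Complex.conjCLE.hasFDerivAt
  have hi : HasDerivAt (fun v : ℂ => v⁻¹) (-(u ^ 2)⁻¹) u := hasDerivAt_inv hz0
  have h1 : HasDerivAt (fun v : ℂ => F v⁻¹) (f u⁻¹ * -(u ^ 2)⁻¹) u := (hFprim _ hw).comp u hi
  have h2 : HasDerivAt (fun v : ℂ => f v⁻¹) (deriv f u⁻¹ * -(u ^ 2)⁻¹) u :=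
    ((hf.differentiableAt (isOpen_ball.mem_nhds hw)).hasDerivAt).comp u hi
  have H1 := (h1.hasFDerivAt.restrictScalars ℝ).comp z hconj
  have H2 := (h2.hasFDerivAt.restrictScalars ℝ).comp z hconj
  have H3 := (hi.hasFDerivAt.restrictScalars ℝ).comp z hconj
  have H := H1.add (H2.mul ((hasFDerivAt_id (𝕜 := ℝ) z).sub H3))
  have H' : HasFDerivAt (extF f F) _ z := H
  rw [dbar, H'.fderiv]
  simp
  rw [← hu]
  field_simp
  ring_nf
  simp
  try ring

lemma norm_sub_inv_conj (z : ℂ) (hz : 1 < ‖z‖) :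
    ‖z - ((starRingEnd ℂ) z)⁻¹‖ = ‖z‖ - ‖z‖⁻¹ := by
  have h0 : z ≠ 0 := by
    intro h
    simp only [h, norm_zero] at hz
    linarith
  have hn : (‖z‖ : ℂ) ≠ 0 := by simpa using h0
  have hz0 : (starRingEnd ℂ) z ≠ 0 := by simpa using h0
  have h1 : z - ((starRingEnd ℂ) z)⁻¹ = z * ((1 - (‖z‖ ^ 2)⁻¹ : ℝ) : ℂ) := by
    have h2 := Complex.mul_conj' z
    push_cast
    rw [← h2]
    field_simp
  have h3 : (‖z‖ ^ 2)⁻¹ ≤ 1 := inv_le_one_of_one_le₀ (one_le_pow₀ hz.le)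
  rw [h1, norm_mul, Complex.norm_real, Real.norm_eq_abs, abs_of_nonneg (by linarith)]
  field_simp

lemma extF_dbar_norm (f F : ℂ → ℂ) (hf : DifferentiableOn ℂ f (ball (0 : ℂ) 1))
    (hFprim : ∀ z ∈ ball (0 : ℂ) 1, HasDerivAt F (f z) z) (z : ℂ) (hz : 1 < ‖z‖) :
    ‖dbar (extF f F) z‖ = ‖deriv f ((starRingEnd ℂ) z)⁻¹‖ * ‖z‖⁻¹ ^ 2 * (‖z‖ - ‖z‖⁻¹) := by
  rw [extF_dbar f F hf hFprim z hz, norm_mul, norm_mul, norm_neg, norm_sub_inv_conj z hz,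
    norm_pow, norm_inv, Complex.norm_conj]

lemma extF_radial (f F : ℂ → ℂ) (L : ℂ) (θ : ℝ)
    (h1 : Tendsto (fun r : ℝ => F ((r : ℂ) * Complex.exp (θ * Complex.I))) (𝓝[<] 1) (𝓝 L))
    (h2 : Tendsto (fun r : ℝ => (1 - r) * ‖f (r * Complex.exp (θ * Complex.I))‖)
      (𝓝[<] 1) (𝓝 0)) :
    Tendsto (fun r : ℝ => extF f F ((r : ℂ) * Complex.exp (θ * Complex.I))) (𝓝[>] 1) (𝓝 L) := by
  have hinv : Tendsto (fun r : ℝ => r⁻¹) (𝓝[>] 1) (𝓝[<] 1) := by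
    apply tendsto_nhdsWithin_of_tendsto_nhds_of_eventually_within
    · have := (tendsto_inv₀ (one_ne_zero (α := ℝ)))
      rw [inv_one] at this
      exact this.mono_left nhdsWithin_le_nhds
    · filter_upwards [self_mem_nhdsWithin] with r hr
      exact inv_lt_one_of_one_lt₀ (mem_Ioi.1 hr)
  have hw : ∀ r : ℝ, ((starRingEnd ℂ) ((r : ℂ) * Complex.exp (θ * Complex.I)))⁻¹ =
      ((r⁻¹ : ℝ) : ℂ) * Complex.exp (θ * Complex.I) := by
    intro r
    rw [map_mul, ← Complex.exp_conj, map_mul, Complex.conj_ofReal, Complex.conj_ofReal,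
      Complex.conj_I, mul_inv, ← Complex.exp_neg]
    push_cast
    congr 2
    ring
  have hA := h1.comp hinv
  have hB : Tendsto (fun r : ℝ => f (((r⁻¹ : ℝ) : ℂ) * Complex.exp (θ * Complex.I)) *
      ((r : ℂ) * Complex.exp (θ * Complex.I) -
        ((r⁻¹ : ℝ) : ℂ) * Complex.exp (θ * Complex.I))) (𝓝[>] 1) (𝓝 0) := by
    rw [tendsto_zero_iff_norm_tendsto_zero]
    have h3 := h2.comp hinv
    have h4 : Tendsto (fun r : ℝ => r + 1) (𝓝[>] 1) (𝓝 (1 + 1)) :=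
      ((continuous_id.add continuous_const).tendsto (1 : ℝ)).mono_left nhdsWithin_le_nhds
    have h5 := h3.mul h4
    rw [zero_mul] at h5
    refine h5.congr' ?_
    filter_upwards [self_mem_nhdsWithin] with r hr
    have hr : 1 < r := hr
    have hri : r⁻¹ < 1 := inv_lt_one_of_one_lt₀ hr
    have hr0 : r ≠ 0 := by positivity
    rw [← sub_mul, norm_mul, norm_mul, Complex.norm_exp_ofReal_mul_I, mul_one,
      ← Complex.ofReal_sub, Complex.norm_real, Real.norm_eq_abs, abs_of_nonneg (by linarith)]
    simp only [Function.comp]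
    field_simp
    ring
  have := hA.add hB
  rw [add_zero] at this
  refine this.congr fun r => ?_
  simp only [extF, hw, Function.comp]

lemma mobius_inv_conj (a w : ℂ) (hw0 : w ≠ 0) :
    1 / ‖mobius a ((starRingEnd ℂ) w)⁻¹‖ ^ 2 = ‖mobius a w‖ ^ 2 := by
  have h0 : (starRingEnd ℂ) w ≠ 0 := by simpa using hw0
  have h1 : mobius a ((starRingEnd ℂ) w)⁻¹ = ((starRingEnd ℂ) (mobius a w))⁻¹ := by
    simp only [mobius, map_div₀, map_sub, map_mul, map_one, Complex.conj_conj, inv_div]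
    rw [← mul_div_mul_right _ _ h0, sub_mul, sub_mul, inv_mul_cancel₀ h0, mul_assoc,
      inv_mul_cancel₀ h0, ← neg_div_neg_eq]
    ring
  rw [h1, norm_inv, Complex.norm_conj]
  simp

/-- Real derivative of `w ↦ 1 / conj w`. -/
def invConjD (w : ℂ) : ℂ →L[ℝ] ℂ :=
  ((ContinuousLinearMap.mul ℝ ℂ) (-(((starRingEnd ℂ) w) ^ 2)⁻¹)).comp (Complex.conjCLE : ℂ →L[ℝ] ℂ)

lemma invConj_hasFDerivAt (w : ℂ) (hw : w ≠ 0) :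
    HasFDerivAt (fun w : ℂ => ((starRingEnd ℂ) w)⁻¹) (invConjD w) w := by
  have hz0 : (starRingEnd ℂ) w ≠ 0 := by simpa using hw
  have hconj : HasFDerivAt (fun z : ℂ => (starRingEnd ℂ) z)
      (Complex.conjCLE : ℂ →L[ℝ] ℂ) w := Complex.conjCLE.hasFDerivAt
  have H3 := ((hasDerivAt_inv hz0).hasFDerivAt.restrictScalars ℝ).comp w hconj
  refine H3.congr_fderiv ?_
  ext v
  simp [invConjD, mul_comm]

lemma invConjD_det (w : ℂ) : |(invConjD w).det| = (‖w‖ ^ 4)⁻¹ := by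
  set c := -(((starRingEnd ℂ) w) ^ 2)⁻¹ with hc
  have h : (invConjD w).det = -Complex.normSq c := by
    rw [ContinuousLinearMap.det, ← LinearMap.det_toMatrix Complex.basisOneI, Matrix.det_fin_two]
    simp [LinearMap.toMatrix_apply, invConjD, ← hc, Complex.normSq_apply]
    ring
  rw [h, abs_neg, abs_of_nonneg (Complex.normSq_nonneg _), Complex.normSq_eq_norm_sq, hc]
  simp
  ring

theorem qk_implies_pseudoanalytic_extension
    (K : ℝ → ℝ)
    (hKrc : ∀ x : ℝ, 0 ≤ x → ContinuousWithinAt K (Set.Ici x) x)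
    (hKmono : MonotoneOn K (Set.Ici (0 : ℝ)))
    (hKnn : ∀ t : ℝ, 0 ≤ t → 0 ≤ K t)
    (hKpos : ∀ t : ℝ, 0 < t → 0 < K t)
    (hKdbl : ∃ C : ℝ, ∀ t ∈ Set.Ioo (0 : ℝ) 1, K (2 * t) ≤ C * K t)
    (h21 : Cond21 K)
    (h22 : ∃ q ∈ Set.Ioo (0 : ℝ) 2, Cond22 K q)
    (n : ℕ) (hn : 2 ≤ n)
    (f F : ℂ → ℂ)
    (hf : DifferentiableOn ℂ f (ball (0 : ℂ) 1))
    (hfQK : MemQK K f)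
    (hF0 : F 0 = 0)
    (hFprim : ∀ z ∈ ball (0 : ℂ) 1, HasDerivAt F (f z) z)
    (hFH2 : MemH2 F)
    (Fstar : ℝ → ℂ)
    (hFb : RadialLimitIn F Fstar) :
    ∃ Ftil : ℂ → ℂ,
      ContDiffOn ℝ 1 Ftil {z : ℂ | 1 < ‖z‖} ∧
      RadialLimitOut Ftil Fstar ∧
      BigOPow Ftil n ∧
      BigOPow (dbar Ftil) (n - 2) ∧
      (⨆ a ∈ ball (0 : ℂ) 1, ∫⁻ z in {z : ℂ | 1 < ‖z‖},
          ENNReal.ofReal (‖dbar Ftil z‖ ^ 2 / (‖z‖ ^ n - 1) ^ 2 *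
            K (1 - 1 / ‖mobius a z‖ ^ 2))) < ⊤ := by
  have hFd : DifferentiableOn ℂ F (ball (0 : ℂ) 1) :=
    fun z hz => (hFprim z hz).differentiableAt.differentiableWithinAt
  obtain ⟨C, hC0, hC⟩ := bloch K hKmono hKpos f hf hfQK
  have hhalf : closedBall (0 : ℂ) (1 / 2) ⊆ ball 0 1 := closedBall_subset_ball (by norm_num)
  have hcomp := isCompact_closedBall (0 : ℂ) (1 / 2)
  have hw2 : ∀ z : ℂ, 2 ≤ ‖z‖ → ((starRingEnd ℂ) z)⁻¹ ∈ closedBall (0 : ℂ) (1 / 2) := by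
    intro z hz
    rw [mem_closedBall_zero_iff, norm_inv, Complex.norm_conj, one_div]
    gcongr
  refine ⟨extF f F, extF_contDiffOn f F hf hFd, ?_, ?_, ?_, ?_⟩
  · unfold RadialLimitOut
    unfold RadialLimitIn at hFb
    filter_upwards [hFb] with θ hθ
    exact extF_radial f F _ θ hθ (bloch_limit f hf C hC _ (Complex.norm_exp_ofReal_mul_I θ))
  · obtain ⟨A, hA⟩ := hcomp.exists_bound_of_continuousOn (hf.continuousOn.mono hhalf)
    obtain ⟨B, hB⟩ := hcomp.exists_bound_of_continuousOn (hFd.continuousOn.mono hhalf)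
    refine ⟨|A| + |B| + 1, 2, by positivity, by norm_num, fun z hz => ?_⟩
    have h1 := hA _ (hw2 z hz)
    have h2 := hB _ (hw2 z hz)
    have h3 := norm_sub_inv_conj z (by linarith)
    have h4 : 0 ≤ ‖z‖⁻¹ := by positivity
    have h5 : ‖z‖ ≤ ‖z‖ ^ n := le_self_pow₀ (by linarith) (by omega)
    calc ‖extF f F z‖ ≤ ‖F ((starRingEnd ℂ) z)⁻¹‖ +
          ‖f ((starRingEnd ℂ) z)⁻¹‖ * ‖z - ((starRingEnd ℂ) z)⁻¹‖ := by
            rw [← norm_mul]; exact norm_add_le _ _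
      _ ≤ |B| + |A| * ‖z‖ := by
            gcongr
            · exact h2.trans (le_abs_self _)
            · exact h1.trans (le_abs_self _)
            · linarith
      _ ≤ (|A| + |B| + 1) * ‖z‖ := by nlinarith [abs_nonneg B]
      _ ≤ _ := by gcongr
  · obtain ⟨A, hA⟩ := hcomp.exists_bound_of_continuousOn
      ((hf.deriv isOpen_ball).continuousOn.mono hhalf)
    refine ⟨|A| + 1, 2, by positivity, by norm_num, fun z hz => ?_⟩
    have h1 := (hA _ (hw2 z hz)).trans (le_abs_self _)
    rw [extF_dbar_norm f F hf hFprim z (by linarith)]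
    have hz0 : 0 < ‖z‖ := by linarith
    have h4 : ‖z‖⁻¹ ^ 2 * (‖z‖ - ‖z‖⁻¹) ≤ 1 := by
      have h5 : ‖z‖⁻¹ ≤ 1 := inv_le_one_of_one_le₀ (by linarith)
      have h6 : 0 < ‖z‖⁻¹ := by positivity
      have h7 : ‖z‖⁻¹ ^ 2 * (‖z‖ - ‖z‖⁻¹) = ‖z‖⁻¹ - ‖z‖⁻¹ ^ 3 := by
        field_simp
      rw [h7]
      have := pow_pos h6 3
      linarith
    have h8 : 1 ≤ ‖z‖ ^ (n - 2) := one_le_pow₀ (by linarith)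
    have h9 : 0 ≤ ‖z‖⁻¹ ^ 2 * (‖z‖ - ‖z‖⁻¹) := by
      have h5 : ‖z‖⁻¹ ≤ 1 := inv_le_one_of_one_le₀ (by linarith)
      exact mul_nonneg (by positivity) (by linarith)
    calc _ = ‖deriv f ((starRingEnd ℂ) z)⁻¹‖ * (‖z‖⁻¹ ^ 2 * (‖z‖ - ‖z‖⁻¹)) := by ring
      _ ≤ |A| * 1 := by gcongr
      _ ≤ (|A| + 1) * ‖z‖ ^ (n - 2) := by nlinarith [abs_nonneg A]
  · refine lt_of_le_of_lt ?_ hfQK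
    refine iSup₂_mono fun a ha => ?_
    set s : Set ℂ := ball 0 1 \ {0} with hs
    have hsm : MeasurableSet s := measurableSet_ball.diff (measurableSet_singleton 0)
    have himg : {z : ℂ | 1 < ‖z‖} = (fun w : ℂ => ((starRingEnd ℂ) w)⁻¹) '' s := by
      ext z
      constructor
      · intro hz
        have hz : 1 < ‖z‖ := hz
        refine ⟨((starRingEnd ℂ) z)⁻¹, ⟨inv_conj_mem hz, ?_⟩, by simp⟩
        rw [mem_singleton_iff, inv_eq_zero, map_eq_zero]
        intro h
        simp only [h, norm_zero] at hz
        linarith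
      · rintro ⟨w, ⟨hw, hw0⟩, rfl⟩
        simp only [mem_ofPred_eq, norm_inv, Complex.norm_conj]
        rw [mem_ball_zero_iff] at hw
        exact (one_lt_inv₀ (norm_pos_iff.2 hw0)).2 hw
    have hinj : InjOn (fun w : ℂ => ((starRingEnd ℂ) w)⁻¹) s := by
      intro x _ y _ hxy
      exact (starRingEnd ℂ).injective (inv_injective hxy)
    have himg' := himg
    rw [himg, lintegral_image_eq_lintegral_abs_det_fderiv_mul volume hsm
      (fun w hw => (invConj_hasFDerivAt w hw.2).hasFDerivWithinAt) hinj]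
    refine le_trans ?_ (lintegral_mono_set (sdiff_subset : s ⊆ ball 0 1))
    refine setLIntegral_mono' hsm fun w hw => ?_
    have hw0 : w ≠ 0 := hw.2
    have hw1 : ‖w‖ < 1 := by simpa using hw.1
    have hwp : 0 < ‖w‖ := norm_pos_iff.2 hw0
    have hz : 1 < ‖((starRingEnd ℂ) w)⁻¹‖ := by
      rw [norm_inv, Complex.norm_conj]
      exact (one_lt_inv₀ hwp).2 hw1
    rw [← ENNReal.ofReal_mul (abs_nonneg _), invConjD_det, mobius_inv_conj a w hw0,
      extF_dbar_norm f F hf hFprim _ hz]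
    simp only [map_inv₀, Complex.conj_conj, inv_inv, norm_inv, Complex.norm_conj]
    have hsig : ‖mobius a w‖ ≤ 1 := by
      have ha' : ‖a‖ < 1 := by simpa using ha
      rw [mobius, norm_div]
      apply div_le_one_of_le₀ _ (norm_nonneg _)
      rw [← sq_le_sq₀ (norm_nonneg _) (norm_nonneg _), ← Complex.normSq_eq_norm_sq,
        ← Complex.normSq_eq_norm_sq]
      have e1 : ‖a‖ ^ 2 = a.re * a.re + a.im * a.im := by
        rw [← Complex.normSq_eq_norm_sq, Complex.normSq_apply]
      have e2 : ‖w‖ ^ 2 = w.re * w.re + w.im * w.im := by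
        rw [← Complex.normSq_eq_norm_sq, Complex.normSq_apply]
      have e3 : 0 ≤ (1 - ‖a‖ ^ 2) * (1 - ‖w‖ ^ 2) := by
        apply mul_nonneg <;> nlinarith [norm_nonneg a, norm_nonneg w]
      rw [e1, e2] at e3
      simp [Complex.normSq_apply]
      nlinarith
    have hKn : 0 ≤ K (1 - ‖mobius a w‖ ^ 2) := by
      apply hKnn
      nlinarith [norm_nonneg (mobius a w)]
    apply ENNReal.ofReal_le_ofReal
    rw [← mul_assoc]
    refine mul_le_mul_of_nonneg_right ?_ hKn
    have hq : (1 : ℝ) < ‖w‖⁻¹ := (one_lt_inv₀ hwp).2 hw1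
    have hden : (‖w‖⁻¹ ^ 2 - 1) ^ 2 ≤ (‖w‖⁻¹ ^ n - 1) ^ 2 := by
      have : ‖w‖⁻¹ ^ 2 ≤ ‖w‖⁻¹ ^ n := pow_le_pow_right₀ hq.le hn
      have : 1 < ‖w‖⁻¹ ^ 2 := one_lt_pow₀ hq (by norm_num)
      gcongr
    have hpos : 0 < (‖w‖⁻¹ ^ 2 - 1) ^ 2 := by
      have : 1 < ‖w‖⁻¹ ^ 2 := one_lt_pow₀ hq (by norm_num)
      apply pow_pos
      linarith
    calc (‖w‖ ^ 4)⁻¹ * ((‖deriv f w‖ * ‖w‖ ^ 2 * (‖w‖⁻¹ - ‖w‖)) ^ 2 / (‖w‖⁻¹ ^ n - 1) ^ 2)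
        ≤ (‖w‖ ^ 4)⁻¹ * ((‖deriv f w‖ * ‖w‖ ^ 2 * (‖w‖⁻¹ - ‖w‖)) ^ 2 /
            (‖w‖⁻¹ ^ 2 - 1) ^ 2) := by gcongr
      _ = ‖deriv f w‖ ^ 2 * ‖w‖ ^ 2 := by
          have : ‖w‖⁻¹ - ‖w‖ = ‖w‖ * (‖w‖⁻¹ ^ 2 - 1) := by field_simp
          rw [this]
          generalize ‖w‖⁻¹ ^ 2 - 1 = y at hpos ⊢
          have hy : y ≠ 0 := by
            rintro rfl
            simp at hpos
          field_simp
      _ ≤ ‖deriv f w‖ ^ 2 := by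
          apply mul_le_of_le_one_right (by positivity)
          exact pow_le_one₀ hwp.le hw1.le

end
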